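/- Consider an angle system on the tetrahedron: six angles α_{ij} = α_{ji} ∈ (0,π) on the edges {i,j} ⊂ {1,2,3,4} such that at each vertex the link triple is spherical, and let c_{ij} be the cosh-length of edge {i,j}. Then there is a permutation of the vertices {1,2,3,4} after which exactly one of the following holds: (1) spherical: c_{ij} ∈ (−1,1) for all edges; (2) hyperbolic: c_{ij} > 1 for all edges; (3) flipped hyperbolic: c₁₂, c₁₃, c₁₄ < −1 and c₂₃, c₂₄, c₃₄ > 1; (4) doubly flipped hyperbolic: c₁₂, c₃₄ > 1 and c₁₃, c₁₄, c₂₃, c₂₄ < −1; (5) Euclidean: c_{ij} = 1 for all edges; (6) flipped Euclidean: c₁₂ = c₁₃ = c₁₄ = −1 and c₂₃ = c₂₄ = c₃₄ = 1; (7) doubly flipped Euclidean: c₁₂ = c₃₄ = 1 and c₁₃ = c₁₄ = c₂₃ = c₂₄ = −1. -/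

import Mathlib

open Real

/-- `coshLen a b c` = (cos a + cos b · cos c)/(sin b · sin c), the cosh of the
generalized length of the edge opposite the angle `a` in a Möbius triangle with
angles `a`, `b`, `c`. -/
noncomputable def coshLen (a b c : ℝ) : ℝ :=
  (Real.cos a + Real.cos b * Real.cos c) / (Real.sin b * Real.sin c)

/-- The face angle β^i_{jk} of the angled tetrahedron with angle system `α`:
the angle at the vertex `i` of the face {i,j,k}, where `l` is the fourth vertex. -/
noncomputable def faceAngle (α : Fin 4 → Fin 4 → ℝ) (i j k l : Fin 4) : ℝ :=
  Real.arccos (coshLen (α i l) (α i j) (α i k))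

/-- The cosh-length c^k_{ij} of the edge {i,j} computed in the face {i,j,k};
`l` is the fourth vertex of the tetrahedron. -/
noncomputable def edgeCosh (α : Fin 4 → Fin 4 → ℝ) (i j k l : Fin 4) : ℝ :=
  coshLen (faceAngle α k i j l) (faceAngle α i j k l) (faceAngle α j i k l)

/-- An angle system on the tetrahedron: symmetric angles in (0,π) on the edges, whose
link triple at each vertex is spherical (angle sum > π and triangle inequalities). -/
structure IsAngleSystem (α : Fin 4 → Fin 4 → ℝ) : Prop where
  symm : ∀ i j, α i j = α j i
  mem_Ioo : ∀ i j, i ≠ j → α i j ∈ Set.Ioo 0 π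
  link_sum_gt : ∀ i j k l : Fin 4, i ≠ j → i ≠ k → i ≠ l → j ≠ k → j ≠ l → k ≠ l →
    α i j + α i k + α i l > π
  link_ti : ∀ i j k l : Fin 4, i ≠ j → i ≠ k → i ≠ l → j ≠ k → j ≠ l → k ≠ l →
    α i j + α i k < α i l + π

/-!
Two facts about a single Möbius triangle suffice. Its squared cosh-lengths lie all below, all at or
all above `1`, and when they are at least `1` the product of the three cosh-lengths is positive;
both follow from the Gram determinant of its angles. The spherical link conditions say that the face
angles are genuine angles in `(0, π)`, so every face of the tetrahedron is a Möbius triangle. Faces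
share edges, so the first fact gives the spherical/Euclidean/hyperbolic trichotomy for all six edges
at once. In the last two cases the second fact makes the signs of the edges those of a cut: the
vertices split into two classes, an edge being negative exactly when it joins different classes. The
splittings `4 + 0`, `3 + 1` and `2 + 2` are the unflipped, flipped and doubly flipped cases.
-/

open Set

/-- The determinant of the Gram matrix (with entries `1` on the diagonal and minus the cosines of
the angles off it) of a Möbius triangle with angles `a`, `b`, `c`. Its sign is the sign of the
curvature of the triangle. -/
noncomputable def angleGramDet (a b c : ℝ) : ℝ :=
  1 - cos a ^ 2 - cos b ^ 2 - cos c ^ 2 - 2 * cos a * cos b * cos c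

/-- `u`, `v`, `w` are the cosh-lengths of the sides of a Möbius triangle, opposite to its angles
`a`, `b`, `c` in this order. The spherical links of an angle system force this on every face. -/
def IsMoebiusTriangle (u v w : ℝ) : Prop :=
  ∃ a ∈ Ioo 0 π, ∃ b ∈ Ioo 0 π, ∃ c ∈ Ioo 0 π,
    u = coshLen a b c ∧ v = coshLen b c a ∧ w = coshLen c a b

lemma coshLen_comm (a b c : ℝ) : coshLen a b c = coshLen a c b := by
  simp only [coshLen, mul_comm]

lemma angleGramDet_rotate (a b c : ℝ) : angleGramDet b c a = angleGramDet a b c := by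
  simp only [angleGramDet]
  ring

lemma one_sub_coshLen_sq {b c : ℝ} (a : ℝ) (hb : sin b ≠ 0) (hc : sin c ≠ 0) :
    1 - coshLen a b c ^ 2 = angleGramDet a b c / (sin b * sin c) ^ 2 := by
  rw [coshLen, angleGramDet]
  field_simp
  rw [sin_sq, sin_sq]
  ring

lemma one_add_two_mul_coshLen_sub_sq {a b c : ℝ} (ha : sin a ≠ 0) (hb : sin b ≠ 0)
    (hc : sin c ≠ 0) :
    1 + 2 * coshLen a b c * coshLen b c a * coshLen c a b
        - coshLen a b c ^ 2 - coshLen b c a ^ 2 - coshLen c a b ^ 2 =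
      (angleGramDet a b c / (sin a * sin b * sin c)) ^ 2 := by
  simp only [coshLen, angleGramDet]
  field_simp
  simp only [sin_sq]
  ring

lemma sign_one_sub_coshLen_sq {b c : ℝ} (a : ℝ) (hb : sin b ≠ 0) (hc : sin c ≠ 0) :
    SignType.sign (1 - coshLen a b c ^ 2) = SignType.sign (angleGramDet a b c) := by
  have hpos : 0 < ((sin b * sin c) ^ 2)⁻¹ := by positivity
  rw [one_sub_coshLen_sq a hb hc, div_eq_mul_inv, sign_mul, sign_pos hpos, mul_one]

lemma coshLen_mem_Ioo_of_spherical {a b c : ℝ} (hsum : π < a + b + c) (ha : b + c < a + π)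
    (hb : a + c < b + π) (hc : a + b < c + π) : coshLen a b c ∈ Ioo (-1) 1 := by
  have hsin : 0 < sin b * sin c :=
    mul_pos (sin_pos_of_pos_of_lt_pi (by linarith) (by linarith))
      (sin_pos_of_pos_of_lt_pi (by linarith) (by linarith))
  have hlower : 0 < cos a + cos (b - c) := by
    rw [cos_add_cos]
    have := cos_pos_of_mem_Ioo (x := (a + (b - c)) / 2) ⟨by linarith, by linarith⟩
    have := cos_pos_of_mem_Ioo (x := (a - (b - c)) / 2) ⟨by linarith, by linarith⟩
    positivity
  have hupper : cos a + cos (b + c) < 0 := by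
    rw [cos_add_cos]
    have := cos_neg_of_pi_div_two_lt_of_lt (x := (a + (b + c)) / 2) (by linarith) (by linarith)
    have := cos_pos_of_mem_Ioo (x := (a - (b + c)) / 2) ⟨by linarith, by linarith⟩
    exact mul_neg_of_neg_of_pos (by linarith) this
  rw [cos_sub] at hlower
  rw [cos_add] at hupper
  exact ⟨by rw [coshLen, lt_div_iff₀ hsin]; linarith, by rw [coshLen, div_lt_one hsin]; linarith⟩

namespace IsMoebiusTriangle

variable {u v w : ℝ}

lemma sign_one_sub_sq_eq (h : IsMoebiusTriangle u v w) :
    SignType.sign (1 - u ^ 2) = SignType.sign (1 - v ^ 2) := by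
  obtain ⟨a, ha, b, hb, c, hc, rfl, rfl, -⟩ := h
  have hsin {x : ℝ} (hx : x ∈ Ioo 0 π) : sin x ≠ 0 := (sin_pos_of_mem_Ioo hx).ne'
  rw [sign_one_sub_coshLen_sq a (hsin hb) (hsin hc), sign_one_sub_coshLen_sq b (hsin hc) (hsin ha),
    angleGramDet_rotate a b c]

lemma sq_add_sq_add_sq_le (h : IsMoebiusTriangle u v w) :
    u ^ 2 + v ^ 2 + w ^ 2 ≤ 1 + 2 * u * v * w := by
  obtain ⟨a, ha, b, hb, c, hc, rfl, rfl, rfl⟩ := h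
  have hgram := one_add_two_mul_coshLen_sub_sq (sin_pos_of_mem_Ioo ha).ne'
    (sin_pos_of_mem_Ioo hb).ne' (sin_pos_of_mem_Ioo hc).ne'
  linarith [sq_nonneg (angleGramDet a b c / (sin a * sin b * sin c))]

lemma mul_mul_pos (h : IsMoebiusTriangle u v w) (hu : 1 ≤ u ^ 2) (hv : 1 ≤ v ^ 2)
    (hw : 1 ≤ w ^ 2) : 0 < u * v * w := by
  linarith [h.sq_add_sq_add_sq_le]

end IsMoebiusTriangle

section CompleteGraph

variable {V : Type*} {c : V → V → ℝ}

lemma exists_forall_edge_eq {β : Type*} [Nontrivial V] {f : V → V → β}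
    (hsymm : ∀ i j, f i j = f j i)
    (hadj : ∀ i j k, i ≠ j → i ≠ k → j ≠ k → f i j = f j k) :
    ∃ x, ∀ i j, i ≠ j → f i j = x := by
  obtain ⟨v, w, hvw⟩ := exists_pair_ne V
  have hv : ∀ i, i ≠ v → f i v = f v w := by
    intro i hi
    rcases eq_or_ne i w with rfl | hiw
    · exact hsymm _ _
    · exact hadj i v w hi hiw hvw
  refine ⟨f v w, fun i j hij => ?_⟩
  rcases eq_or_ne j v with rfl | hj
  · exact hv i hij
  rcases eq_or_ne i v with rfl | hi
  · rw [hsymm, hv j hj]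
  · rw [hadj i j v hij hi hj, hv j hj]

/-- Harary's balance theorem for signed complete graphs. -/
lemma exists_cut_of_mul_mul_pos (hsymm : ∀ i j, c i j = c j i)
    (hpos : ∀ i j k, i ≠ j → i ≠ k → j ≠ k → 0 < c i j * c j k * c k i) :
    ∃ s : V → Bool, ∀ i j, i ≠ j → (0 < c i j ↔ s i = s j) := by
  classical
  rcases isEmpty_or_nonempty V with _ | ⟨⟨v⟩⟩
  · exact ⟨fun _ => true, fun i => isEmptyElim i⟩
  refine ⟨fun i => decide (i = v ∨ 0 < c v i), fun i j hij => ?_⟩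
  rcases eq_or_ne i v with rfl | hi
  · simp [hij.symm]
  rcases eq_or_ne j v with rfl | hj
  · simp [hij, hsymm i j]
  have htriangle : 0 < c i j * (c v i * c v j) := by
    rw [hsymm v j]
    linarith [hpos v i j hi.symm hj.symm hij]
  have hvi : c v i ≠ 0 := left_ne_zero_of_mul (right_ne_zero_of_mul htriangle.ne')
  have hvj : c v j ≠ 0 := right_ne_zero_of_mul (right_ne_zero_of_mul htriangle.ne')
  simp only [hi, hj, false_or, decide_eq_decide]
  rw [pos_iff_pos_of_mul_pos htriangle, mul_pos_iff]
  grind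

lemma exists_forall_sign_one_sub_sq_eq [Nontrivial V] (hsymm : ∀ i j, c i j = c j i)
    (hface : ∀ i j k, i ≠ j → i ≠ k → j ≠ k → IsMoebiusTriangle (c i j) (c j k) (c k i)) :
    ∃ ε : SignType, ∀ i j, i ≠ j → SignType.sign (1 - c i j ^ 2) = ε :=
  exists_forall_edge_eq (fun i j => by rw [hsymm])
    fun i j k hij hik hjk => (hface i j k hij hik hjk).sign_one_sub_sq_eq

lemma exists_cut_of_one_le_sq (hsymm : ∀ i j, c i j = c j i)
    (hface : ∀ i j k, i ≠ j → i ≠ k → j ≠ k → IsMoebiusTriangle (c i j) (c j k) (c k i))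
    (hsq : ∀ i j, i ≠ j → 1 ≤ c i j ^ 2) :
    ∃ s : V → Bool, ∀ i j, i ≠ j → (s i = s j → 1 ≤ c i j) ∧ (s i ≠ s j → c i j ≤ -1) := by
  obtain ⟨s, hs⟩ := exists_cut_of_mul_mul_pos hsymm fun i j k hij hik hjk =>
    (hface i j k hij hik hjk).mul_mul_pos (hsq i j hij) (hsq j k hjk) (hsq k i hik.symm)
  refine ⟨s, fun i j hij => ?_⟩
  rw [Ne, ← hs i j hij]
  have habs := le_abs.1 ((one_le_sq_iff_one_le_abs _).1 (hsq i j hij))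
  constructor <;> intro h <;> rcases habs with habs | habs <;> linarith

end CompleteGraph

lemma exists_perm_cut_eq_initial (s : Fin 4 → Bool) : ∃ n : Fin 3, ∃ σ : Equiv.Perm (Fin 4),
    ∀ i j, s (σ i) = s (σ j) ↔ ((i : ℕ) < n ↔ (j : ℕ) < n) := by
  revert s
  decide

lemma exists_perm_of_cut {P N : Fin 4 → Fin 4 → Prop} {s : Fin 4 → Bool}
    (hP : ∀ i j, i ≠ j → s i = s j → P i j) (hN : ∀ i j, s i ≠ s j → N i j) :
    ∃ σ : Equiv.Perm (Fin 4),
      (∀ i j, i ≠ j → P (σ i) (σ j)) ∨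
      (N (σ 0) (σ 1) ∧ N (σ 0) (σ 2) ∧ N (σ 0) (σ 3) ∧
        P (σ 1) (σ 2) ∧ P (σ 1) (σ 3) ∧ P (σ 2) (σ 3)) ∨
      (P (σ 0) (σ 1) ∧ P (σ 2) (σ 3) ∧
        N (σ 0) (σ 2) ∧ N (σ 0) (σ 3) ∧ N (σ 1) (σ 2) ∧ N (σ 1) (σ 3)) := by
  obtain ⟨n, σ, h⟩ := exists_perm_cut_eq_initial s
  have hP' {i j : Fin 4} (hij : i ≠ j) (hn : (i : ℕ) < n ↔ (j : ℕ) < n) : P (σ i) (σ j) :=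
    hP _ _ (σ.injective.ne hij) ((h i j).2 hn)
  have hN' {i j : Fin 4} (hn : ¬((i : ℕ) < n ↔ (j : ℕ) < n)) : N (σ i) (σ j) :=
    hN _ _ (mt (h i j).1 hn)
  refine ⟨σ, ?_⟩
  fin_cases n
  · exact .inl fun i j hij => hP' hij (by simp)
  · exact .inr (.inl ⟨hN' (by decide), hN' (by decide), hN' (by decide),
      hP' (by decide) (by decide), hP' (by decide) (by decide), hP' (by decide) (by decide)⟩)
  · exact .inr (.inr ⟨hP' (by decide) (by decide), hP' (by decide) (by decide),
      hN' (by decide), hN' (by decide), hN' (by decide), hN' (by decide)⟩)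

lemma faceAngle_comm (α : Fin 4 → Fin 4 → ℝ) (i j k l : Fin 4) :
    faceAngle α i j k l = faceAngle α i k j l := by
  rw [faceAngle, coshLen_comm, faceAngle]

lemma edgeCosh_comm (α : Fin 4 → Fin 4 → ℝ) (i j k l : Fin 4) :
    edgeCosh α i j k l = edgeCosh α j i k l := by
  rw [edgeCosh, coshLen_comm, faceAngle_comm, edgeCosh]

lemma exists_ne_and_ne_and_ne : ∀ i j k : Fin 4, ∃ l, i ≠ l ∧ j ≠ l ∧ k ≠ l := by decide

lemma symm_of_eq_edgeCosh {α c : Fin 4 → Fin 4 → ℝ}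
    (hc : ∀ i j k l : Fin 4, i ≠ j → i ≠ k → i ≠ l → j ≠ k → j ≠ l → k ≠ l →
      c i j = edgeCosh α i j k l) (i j : Fin 4) : c i j = c j i := by
  rcases eq_or_ne i j with rfl | hij
  · rfl
  obtain ⟨k, hik, hjk, -⟩ := exists_ne_and_ne_and_ne i j j
  obtain ⟨l, hil, hjl, hkl⟩ := exists_ne_and_ne_and_ne i j k
  rw [hc i j k l hij hik hil hjk hjl hkl, hc j i k l hij.symm hjk hjl hik hil hkl, edgeCosh_comm]

namespace IsAngleSystem

variable {α : Fin 4 → Fin 4 → ℝ} {i j k l : Fin 4}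

lemma faceAngle_mem_Ioo (hα : IsAngleSystem α) (hij : i ≠ j) (hik : i ≠ k) (hil : i ≠ l)
    (hjk : j ≠ k) (hjl : j ≠ l) (hkl : k ≠ l) : faceAngle α i j k l ∈ Ioo 0 π := by
  have hcosh := coshLen_mem_Ioo_of_spherical
    (hα.link_sum_gt i l j k hil hij hik hjl.symm hkl.symm hjk)
    (hα.link_ti i j k l hij hik hil hjk hjl hkl)
    (hα.link_ti i l k j hil hik hij hkl.symm hjl.symm hjk.symm)
    (hα.link_ti i l j k hil hij hik hjl.symm hkl.symm hjk)
  exact ⟨arccos_pos.2 hcosh.2, arccos_lt_pi.2 hcosh.1⟩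

lemma isMoebiusTriangle_edgeCosh (hα : IsAngleSystem α) (hij : i ≠ j) (hik : i ≠ k) (hil : i ≠ l)
    (hjk : j ≠ k) (hjl : j ≠ l) (hkl : k ≠ l) :
    IsMoebiusTriangle (edgeCosh α i j k l) (edgeCosh α j k i l) (edgeCosh α k i j l) := by
  refine ⟨faceAngle α k i j l, hα.faceAngle_mem_Ioo hik.symm hjk.symm hkl hij hil hjl,
    faceAngle α i j k l, hα.faceAngle_mem_Ioo hij hik hil hjk hjl hkl,
    faceAngle α j i k l, hα.faceAngle_mem_Ioo hij.symm hjk hjl hik hil hkl, rfl, ?_, ?_⟩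
  · rw [edgeCosh, faceAngle_comm α j k i, faceAngle_comm α k j i]
  · rw [edgeCosh, faceAngle_comm α i k j, faceAngle_comm α j k i]

lemma isMoebiusTriangle_of_eq_edgeCosh (hα : IsAngleSystem α) {c : Fin 4 → Fin 4 → ℝ}
    (hc : ∀ i j k l : Fin 4, i ≠ j → i ≠ k → i ≠ l → j ≠ k → j ≠ l → k ≠ l →
      c i j = edgeCosh α i j k l) (i j k : Fin 4) (hij : i ≠ j) (hik : i ≠ k) (hjk : j ≠ k) :
    IsMoebiusTriangle (c i j) (c j k) (c k i) := by
  obtain ⟨l, hil, hjl, hkl⟩ := exists_ne_and_ne_and_ne i j k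
  rw [hc i j k l hij hik hil hjk hjl hkl, hc j k i l hjk hij.symm hjl hik.symm hkl hil,
    hc k i j l hik.symm hjk.symm hkl hij hil hjl]
  exact hα.isMoebiusTriangle_edgeCosh hij hik hil hjk hjl hkl

end IsAngleSystem

theorem simplex_classification_general (c : Fin 4 → Fin 4 → ℝ) (hsymm : ∀ i j, c i j = c j i)
    (hface : ∀ i j k, i ≠ j → i ≠ k → j ≠ k → IsMoebiusTriangle (c i j) (c j k) (c k i)) :
    ∃ σ : Equiv.Perm (Fin 4),
      let d : Fin 4 → Fin 4 → ℝ := fun i j => c (σ i) (σ j)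
      (∀ i j, i ≠ j → d i j ∈ Ioo (-1 : ℝ) 1) ∨
      (∀ i j, i ≠ j → 1 < d i j) ∨
      (d 0 1 < -1 ∧ d 0 2 < -1 ∧ d 0 3 < -1 ∧ 1 < d 1 2 ∧ 1 < d 1 3 ∧ 1 < d 2 3) ∨
      (1 < d 0 1 ∧ 1 < d 2 3 ∧ d 0 2 < -1 ∧ d 0 3 < -1 ∧ d 1 2 < -1 ∧ d 1 3 < -1) ∨
      (∀ i j, i ≠ j → d i j = 1) ∨
      (d 0 1 = -1 ∧ d 0 2 = -1 ∧ d 0 3 = -1 ∧ d 1 2 = 1 ∧ d 1 3 = 1 ∧ d 2 3 = 1) ∨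
      (d 0 1 = 1 ∧ d 2 3 = 1 ∧ d 0 2 = -1 ∧ d 0 3 = -1 ∧ d 1 2 = -1 ∧ d 1 3 = -1) := by
  obtain ⟨ε, hε⟩ := exists_forall_sign_one_sub_sq_eq hsymm hface
  cases ε with
  | pos =>
    refine ⟨1, .inl fun i j hij => abs_lt.1 ((sq_lt_one_iff_abs_lt_one _).1 ?_)⟩
    exact sub_pos.1 (sign_eq_one_iff.1 (hε i j hij))
  | neg =>
    have hsq : ∀ i j, i ≠ j → 1 < c i j ^ 2 := fun i j hij =>
      sub_neg.1 (sign_eq_neg_one_iff.1 (hε i j hij))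
    obtain ⟨s, hs⟩ := exists_cut_of_one_le_sq hsymm hface fun i j hij => (hsq i j hij).le
    obtain ⟨σ, h⟩ := exists_perm_of_cut (P := fun i j => 1 < c i j) (N := fun i j => c i j < -1)
      (fun i j hij h => by nlinarith [hsq i j hij, (hs i j hij).1 h])
      (fun i j h => by
        have hij := ne_of_apply_ne s h
        nlinarith [hsq i j hij, (hs i j hij).2 h])
    rcases h with h | h | h
    exacts [⟨σ, .inr <| .inl h⟩, ⟨σ, .inr <| .inr <| .inl h⟩,
      ⟨σ, .inr <| .inr <| .inr <| .inl h⟩]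
  | zero =>
    have hsq : ∀ i j, i ≠ j → c i j ^ 2 = 1 := fun i j hij =>
      (sub_eq_zero.1 (sign_eq_zero_iff.1 (hε i j hij))).symm
    obtain ⟨s, hs⟩ := exists_cut_of_one_le_sq hsymm hface fun i j hij => (hsq i j hij).ge
    obtain ⟨σ, h⟩ := exists_perm_of_cut (P := fun i j => c i j = 1) (N := fun i j => c i j = -1)
      (fun i j hij h => by nlinarith [hsq i j hij, (hs i j hij).1 h])
      (fun i j h => by
        have hij := ne_of_apply_ne s h
        nlinarith [hsq i j hij, (hs i j hij).2 h])
    rcases h with h | h | h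
    exacts [⟨σ, .inr <| .inr <| .inr <| .inr <| .inl h⟩,
      ⟨σ, .inr <| .inr <| .inr <| .inr <| .inr <| .inl h⟩,
      ⟨σ, .inr <| .inr <| .inr <| .inr <| .inr <| .inr h⟩]

/-- For an angle system on the tetrahedron with cosh-lengths c_{ij}
(well defined, i.e. independent of the face used to compute them), there is a
permutation of the vertices after which exactly one of the seven cases holds:
spherical, hyperbolic, flipped hyperbolic, doubly flipped hyperbolic, Euclidean,
flipped Euclidean, doubly flipped Euclidean. -/
theorem simplex_classification (α : Fin 4 → Fin 4 → ℝ) (hα : IsAngleSystem α)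
    (c : Fin 4 → Fin 4 → ℝ)
    (hc : ∀ i j k l : Fin 4, i ≠ j → i ≠ k → i ≠ l → j ≠ k → j ≠ l → k ≠ l →
      c i j = edgeCosh α i j k l) :
    ∃ σ : Equiv.Perm (Fin 4),
      let d : Fin 4 → Fin 4 → ℝ := fun i j => c (σ i) (σ j)
      -- (1) spherical
      (∀ i j, i ≠ j → d i j ∈ Set.Ioo (-1 : ℝ) 1) ∨
      -- (2) hyperbolic
      (∀ i j, i ≠ j → 1 < d i j) ∨
      -- (3) flipped hyperbolic (flipped at the first vertex)
      (d 0 1 < -1 ∧ d 0 2 < -1 ∧ d 0 3 < -1 ∧ 1 < d 1 2 ∧ 1 < d 1 3 ∧ 1 < d 2 3) ∨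
      -- (4) doubly flipped hyperbolic
      (1 < d 0 1 ∧ 1 < d 2 3 ∧ d 0 2 < -1 ∧ d 0 3 < -1 ∧ d 1 2 < -1 ∧ d 1 3 < -1) ∨
      -- (5) Euclidean
      (∀ i j, i ≠ j → d i j = 1) ∨
      -- (6) flipped Euclidean
      (d 0 1 = -1 ∧ d 0 2 = -1 ∧ d 0 3 = -1 ∧ d 1 2 = 1 ∧ d 1 3 = 1 ∧ d 2 3 = 1) ∨
      -- (7) doubly flipped Euclidean
      (d 0 1 = 1 ∧ d 2 3 = 1 ∧ d 0 2 = -1 ∧ d 0 3 = -1 ∧ d 1 2 = -1 ∧ d 1 3 = -1) := by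
  exact simplex_classification_general c (symm_of_eq_edgeCosh hc)
    (hα.isMoebiusTriangle_of_eq_edgeCosh hc)
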